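/- Let P be a prime, J a positive integer, B a symplectic form on a 2J-dimensional vector space V over F_P, and Ψ the dual of a symplectic ETF for B. Then bin(Ψ) is exactly the set of all affine Lagrangian subspaces of V. Consequently bin(Ψ) forms a BIBD with parameters V = P^{2J}, K = P^J, Λ = ∏_{j=1}^{J−1}(P^j+1), R = ∏_{j=1}^{J}(P^j+1), B = P^J·∏_{j=1}^{J}(P^j+1): there are exactly P^J·∏_{j=1}^{J}(P^j+1) affine Lagrangian subspaces of V, each of cardinality P^J, every point of V lies in exactly ∏_{j=1}^{J}(P^j+1) of them, and every pair of distinct points of V lies in exactly ∏_{j=1}^{J−1}(P^j+1) of them. -/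

import Mathlib

open scoped BigOperators

noncomputable section

/-- ETF predicate. -/
def IsETF (𝕜 : Type*) {E ι : Type*} [RCLike 𝕜] [NormedAddCommGroup E]
    [InnerProductSpace 𝕜 E] [Fintype ι] (φ : ι → E) : Prop :=
  (∃ S : ℝ, 0 < S ∧ ∀ n, (inner 𝕜 (φ n) (φ n) : 𝕜) = (S : 𝕜)) ∧
  (∃ C : ℝ, 0 < C ∧ ∀ n₁ n₂, n₁ ≠ n₂ → ‖(inner 𝕜 (φ n₁) (φ n₂) : 𝕜)‖ = C) ∧
  (∃ A : ℝ, 0 < A ∧ ∀ n₁ n₃,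
      (∑ n₂, (inner 𝕜 (φ n₁) (φ n₂) : 𝕜) * (inner 𝕜 (φ n₂) (φ n₃) : 𝕜)) =
        (A : 𝕜) * (inner 𝕜 (φ n₁) (φ n₃) : 𝕜))

/-- Regular simplex predicate for a subfamily. -/
def IsRegularSimplex (𝕜 : Type*) {E ι : Type*} [RCLike 𝕜] [NormedAddCommGroup E]
    [InnerProductSpace 𝕜 E] [Fintype ι] (φ : ι → E) (K : Finset ι) : Prop :=
  IsETF 𝕜 (fun k : K => φ k.1) ∧
  Module.finrank 𝕜 (Submodule.span 𝕜 (φ '' (K : Set ι))) + 1 = K.card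

/-- The binder of a family. -/
def binder (𝕜 : Type*) {E ι : Type*} [RCLike 𝕜] [NormedAddCommGroup E]
    [InnerProductSpace 𝕜 E] [Fintype ι] (φ : ι → E) : Set (Finset ι) :=
  {K | IsRegularSimplex 𝕜 φ K}

/-- A bilinear form is symplectic: alternating and nondegenerate. -/
def IsSymplectic {F V : Type*} [CommRing F] [AddCommGroup V] [Module F V]
    (B : V →ₗ[F] V →ₗ[F] F) : Prop :=
  (∀ v, B v v = 0) ∧ ∀ v : V, v ≠ 0 → ∃ w, B v w ≠ 0

/-- The orthogonal complement of a subset with respect to a bilinear form. -/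
def sympPerp {F V : Type*} [CommRing F] [AddCommGroup V] [Module F V]
    (B : V →ₗ[F] V →ₗ[F] F) (S : Set V) : Set V :=
  {w | ∀ v ∈ S, B v w = 0}

/-- A subspace is Lagrangian if it equals its own orthogonal complement. -/
def IsLagrangian {F V : Type*} [CommRing F] [AddCommGroup V] [Module F V]
    (B : V →ₗ[F] V →ₗ[F] F) (L : Submodule F V) : Prop :=
  (L : Set V) = sympPerp B (L : Set V)

/-- The affine Lagrangian subspaces: cosets `v + L` of Lagrangian subspaces. -/
def affineLagrangians {F V : Type*} [CommRing F] [AddCommGroup V] [Module F V]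
    (B : V →ₗ[F] V →ₗ[F] F) : Set (Set V) :=
  {A | ∃ (v : V) (L : Submodule F V), IsLagrangian B L ∧
        A = (fun x => v + x) '' (L : Set V)}


theorem symp_skew {F V : Type*} [CommRing F] [AddCommGroup V] [Module F V]
    {B : V →ₗ[F] V →ₗ[F] F} (h : ∀ v, B v v = 0) (x y : V) : B x y = - B y x := by
  have := h (x + y)
  simp [h] at this
  linear_combination this

/-- The orthogonal complement of a pair. -/
def pairPerp {F V : Type*} [CommRing F] [AddCommGroup V] [Module F V]
    (B : V →ₗ[F] V →ₗ[F] F) (v w : V) : Submodule F V :=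
  LinearMap.ker (B v) ⊓ LinearMap.ker (B w)

theorem mem_pairPerp {F V : Type*} [CommRing F] [AddCommGroup V] [Module F V]
    {B : V →ₗ[F] V →ₗ[F] F} {v w u : V} : u ∈ pairPerp B v w ↔ B v u = 0 ∧ B w u = 0 := by
  simp [pairPerp]

/-- Restriction of a form. -/
def restrForm {F V : Type*} [CommRing F] [AddCommGroup V] [Module F V]
    (B : V →ₗ[F] V →ₗ[F] F) (W : Submodule F V) : W →ₗ[F] W →ₗ[F] F :=
  B.compl₁₂ W.subtype W.subtype

@[simp] theorem restrForm_apply {F V : Type*} [CommRing F] [AddCommGroup V] [Module F V]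
    (B : V →ₗ[F] V →ₗ[F] F) (W : Submodule F V) (x y : W) : restrForm B W x y = B x y := rfl

/-- Projection formula. -/
def pairProj {F V : Type*} [CommRing F] [AddCommGroup V] [Module F V]
    (B : V →ₗ[F] V →ₗ[F] F) (v w : V) : V →ₗ[F] V :=
  LinearMap.id - (B v).smulRight w + (B w).smulRight v

theorem pairProj_apply {F V : Type*} [CommRing F] [AddCommGroup V] [Module F V]
    (B : V →ₗ[F] V →ₗ[F] F) (v w u : V) :
    pairProj B v w u = u - B v u • w + B w u • v := by
  simp [pairProj]

theorem pairProj_mem {F V : Type*} [CommRing F] [AddCommGroup V] [Module F V]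
    {B : V →ₗ[F] V →ₗ[F] F} (h : ∀ v, B v v = 0) {v w : V} (hvw : B v w = 1) (u : V) :
    pairProj B v w u ∈ pairPerp B v w := by
  have h2 : B w v = -1 := by rw [symp_skew h, hvw]
  rw [mem_pairPerp, pairProj_apply]
  simp [h, hvw, h2]

theorem pairProj_of_mem {F V : Type*} [CommRing F] [AddCommGroup V] [Module F V]
    {B : V →ₗ[F] V →ₗ[F] F} {v w u : V} (hu : u ∈ pairPerp B v w) :
    pairProj B v w u = u := by
  rw [mem_pairPerp] at hu
  simp [pairProj_apply, hu.1, hu.2]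

theorem isLagrangian_iff {F V : Type*} [CommRing F] [AddCommGroup V] [Module F V]
    {B : V →ₗ[F] V →ₗ[F] F} {L : Submodule F V} :
    IsLagrangian B L ↔ ∀ u, u ∈ L ↔ ∀ x ∈ L, B x u = 0 := by
  simp [IsLagrangian, Set.ext_iff, sympPerp]

theorem restrForm_symplectic {F V : Type*} [CommRing F] [AddCommGroup V] [Module F V]
    {B : V →ₗ[F] V →ₗ[F] F} (h : IsSymplectic B) {v w : V} (hvw : B v w = 1) :
    IsSymplectic (restrForm B (pairPerp B v w)) := by
  refine ⟨fun x => h.1 _, fun x hx => ?_⟩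
  obtain ⟨y, hy⟩ := h.2 x (by simpa using hx)
  refine ⟨⟨pairProj B v w y, pairProj_mem h.1 hvw y⟩, ?_⟩
  obtain ⟨h1, h2⟩ := mem_pairPerp.1 x.2
  have h3 := symp_skew h.1 (x : V) v
  have h4 := symp_skew h.1 (x : V) w
  simp [pairProj_apply, h3, h4, h1, h2, hy]

/-- Lift of a Lagrangian. -/
def liftLag {F V : Type*} [CommRing F] [AddCommGroup V] [Module F V]
    (B : V →ₗ[F] V →ₗ[F] F) (v w : V) (M : Submodule F (pairPerp B v w)) : Submodule F V :=
  LinearMap.ker (B v) ⊓ (M.map (pairPerp B v w).subtype).comap (pairProj B v w)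

theorem mem_liftLag {F V : Type*} [CommRing F] [AddCommGroup V] [Module F V]
    {B : V →ₗ[F] V →ₗ[F] F} {v w : V} {M : Submodule F (pairPerp B v w)} {u : V} :
    u ∈ liftLag B v w M ↔ B v u = 0 ∧ ∃ m ∈ M, (m : V) = pairProj B v w u := by
  simp only [liftLag, Submodule.mem_inf, LinearMap.mem_ker, Submodule.mem_comap,
    Submodule.mem_map, Submodule.subtype_apply]

theorem card_lag_through {F V : Type*} [CommRing F] [AddCommGroup V] [Module F V]
    {B : V →ₗ[F] V →ₗ[F] F} (h : IsSymplectic B) {v w : V} (hvw : B v w = 1) :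
    {L : Submodule F V | IsLagrangian B L ∧ v ∈ L}.ncard =
      {M | IsLagrangian (restrForm B (pairPerp B v w)) M}.ncard := by
  have sk := symp_skew h.1
  have hwv : B w v = -1 := by rw [sk, hvw]
  have pv : pairProj B v w v = 0 := by simp [pairProj_apply, h.1, hwv]
  symm
  refine Set.ncard_congr (fun M _ => liftLag B v w M) ?_ ?_ ?_
  · intro M hM
    rw [Set.mem_ofPred_eq, isLagrangian_iff] at hM
    have hv : v ∈ liftLag B v w M := mem_liftLag.2 ⟨h.1 v, 0, M.zero_mem, by simp [pv]⟩
    refine ⟨isLagrangian_iff.2 fun u => ⟨fun hu x hx => ?_, fun hu => ?_⟩, hv⟩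
    · obtain ⟨u1, m, hm, hmu⟩ := mem_liftLag.1 hu
      obtain ⟨x1, n, hn, hnx⟩ := mem_liftLag.1 hx
      have := (hM m).1 hm n hn
      rw [restrForm_apply, hmu, hnx, pairProj_apply, pairProj_apply] at this
      have e := sk x v
      simpa [u1, x1, h.1, e] using this
    · have u1 := hu v hv
      refine mem_liftLag.2 ⟨u1, ⟨_, pairProj_mem h.1 hvw u⟩, (hM _).2 fun x hx => ?_, rfl⟩
      have hx' : (x : V) ∈ liftLag B v w M :=
        mem_liftLag.2 ⟨(mem_pairPerp.1 x.2).1, x, hx, (pairProj_of_mem x.2).symm⟩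
      have := hu x hx'
      have e := sk x v
      rw [(mem_pairPerp.1 x.2).1] at e
      simp [pairProj_apply, this, u1, e]
  · intro M M' _ _ e
    have key : ∀ (N : Submodule F (pairPerp B v w)) (x : pairPerp B v w),
        (x : V) ∈ liftLag B v w N ↔ x ∈ N := by
      intro N x
      rw [mem_liftLag, pairProj_of_mem x.2]
      constructor
      · rintro ⟨_, m, hm, e⟩
        rwa [← Subtype.ext e]
      · intro hx
        exact ⟨(mem_pairPerp.1 x.2).1, x, hx, rfl⟩
    ext x
    rw [← key M, ← key M']
    rw [e]
  · rintro L ⟨hL, hv⟩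
    rw [isLagrangian_iff] at hL
    have hp : ∀ u ∈ L, B v u = 0 := fun u hu => (hL u).1 hu v hv
    have hpr : ∀ u, B v u = 0 → (pairProj B v w u ∈ L ↔ u ∈ L) := by
      intro u hu
      rw [pairProj_apply, hu, zero_smul, sub_zero]
      exact Submodule.add_mem_iff_left _ (L.smul_mem _ hv)
    refine ⟨L.comap (pairPerp B v w).subtype, ?_, ?_⟩
    · refine isLagrangian_iff.2 fun u => ⟨fun hu x hx => (hL _).1 hu _ hx, fun hu => ?_⟩
      refine (hL _).2 fun x hx => ?_
      have := hu ⟨_, pairProj_mem h.1 hvw x⟩ ((hpr x (hp x hx)).2 hx)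
      simpa [pairProj_apply, hp x hx, (mem_pairPerp.1 u.2).1] using this
    · ext u
      rw [mem_liftLag]
      constructor
      · rintro ⟨h1, m, hm, e⟩
        rw [← hpr u h1, ← e]
        exact hm
      · intro hu
        exact ⟨hp u hu, ⟨_, pairProj_mem h.1 hvw u⟩, (hpr u (hp u hu)).2 hu, rfl⟩

theorem card_pairPerp {F V : Type*} [CommRing F] [AddCommGroup V] [Module F V]
    {B : V →ₗ[F] V →ₗ[F] F} (h : IsSymplectic B) {v w : V} (hvw : B v w = 1) :
    Nat.card V = Nat.card F * Nat.card F * Nat.card (pairPerp B v w) := by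
  have hwv : B w v = -1 := by rw [symp_skew h.1, hvw]
  rw [← Nat.card_prod, ← Nat.card_prod]
  refine Nat.card_congr
    { toFun := fun u => ((B v u, B w u), ⟨_, pairProj_mem h.1 hvw u⟩)
      invFun := fun p => p.2 + p.1.1 • w - p.1.2 • v
      left_inv := fun u => by simp only [pairProj_apply]; abel
      right_inv := ?_ }
  rintro ⟨⟨a, b⟩, x⟩
  have := mem_pairPerp.1 x.2
  simp only [Prod.mk.injEq]
  refine ⟨⟨?_, ?_⟩, Subtype.ext ?_⟩
  · simp [this, h.1, hvw]
  · simp [this, h.1, hwv]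
  · simp [pairProj_apply, this, h.1, hvw, hwv]
    abel

theorem card_isotropic_le {P : ℕ} [Fact P.Prime] {V : Type*} [AddCommGroup V] [Module (ZMod P) V]
    [Finite V] {J : ℕ} (hc : Module.finrank (ZMod P) V = 2 * J)
    {B : V →ₗ[ZMod P] V →ₗ[ZMod P] ZMod P} (h : IsSymplectic B)
    {L : Submodule (ZMod P) V} :
    ((∀ x ∈ L, ∀ y ∈ L, B x y = 0) → Nat.card L ≤ P ^ J) ∧
    (IsLagrangian B L → Nat.card L = P ^ J) ∧
    ((∀ x ∈ L, ∀ y ∈ L, B x y = 0) → Nat.card L = P ^ J → IsLagrangian B L) := by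
  have hP := (Fact.out : P.Prime)
  have hrefl : LinearMap.BilinForm.IsRefl (B : LinearMap.BilinForm (ZMod P) V) := by
    intro x y hxy
    rw [symp_skew h.1, hxy, neg_zero]
  have hnd : LinearMap.BilinForm.Nondegenerate (B : LinearMap.BilinForm (ZMod P) V) := by
    refine hrefl.nondegenerate_iff_separatingLeft.2 ?_
    intro x hx
    by_contra hne
    obtain ⟨w, hw⟩ := h.2 x hne
    exact hw (hx w)
  have hf := LinearMap.BilinForm.finrank_orthogonal hnd L
  have hle := Submodule.finrank_le L
  have hcard : ∀ S : Submodule (ZMod P) V, Nat.card S = P ^ Module.finrank (ZMod P) S := by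
    intro S
    rw [Module.natCard_eq_pow_finrank (K := ZMod P), Nat.card_zmod]
  have mem_o : ∀ u, u ∈ LinearMap.BilinForm.orthogonal B L ↔ ∀ x ∈ L, B x u = 0 := fun u => Iff.rfl
  rw [hcard]
  have hi : (∀ x ∈ L, ∀ y ∈ L, B x y = 0) → L ≤ LinearMap.BilinForm.orthogonal B L :=
    fun hL u hu => (mem_o u).2 fun x hx => hL x hx u hu
  refine ⟨fun hL => ?_, fun hL => ?_, fun hL e => ?_⟩
  · have := Submodule.finrank_mono (hi hL)
    exact Nat.pow_le_pow_right hP.pos (by omega)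
  · have : LinearMap.BilinForm.orthogonal B L = L := by
      ext u
      rw [mem_o, (isLagrangian_iff.1 hL u)]
    rw [this] at hf
    congr 1
    omega
  · have e' := Nat.pow_right_injective hP.two_le e
    have := Submodule.eq_of_le_of_finrank_eq (hi hL) (by omega)
    refine isLagrangian_iff.2 fun u => ?_
    rw [← mem_o, ← this]

theorem exists_pair {P : ℕ} [Fact P.Prime] {V : Type*} [AddCommGroup V] [Module (ZMod P) V]
    {B : V →ₗ[ZMod P] V →ₗ[ZMod P] ZMod P} (h : IsSymplectic B) {v : V} (hv : v ≠ 0) :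
    ∃ w, B v w = 1 := by
  obtain ⟨w, hw⟩ := h.2 v hv
  exact ⟨(B v w)⁻¹ • w, by simp [hw]⟩

theorem finrank_pairPerp {P : ℕ} [Fact P.Prime] {V : Type*} [AddCommGroup V] [Module (ZMod P) V]
    [Finite V] {J : ℕ} (hc : Module.finrank (ZMod P) V = 2 * (J + 1))
    {B : V →ₗ[ZMod P] V →ₗ[ZMod P] ZMod P} (h : IsSymplectic B) {v w : V} (hvw : B v w = 1) :
    Module.finrank (ZMod P) (pairPerp B v w) = 2 * J := by
  have hP := (Fact.out : P.Prime)
  have := card_pairPerp h hvw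
  rw [Module.natCard_eq_pow_finrank (K := ZMod P), Nat.card_zmod, hc,
    Module.natCard_eq_pow_finrank (K := ZMod P) (V := pairPerp B v w), Nat.card_zmod, ← pow_two,
    ← pow_add] at this
  have := Nat.pow_right_injective hP.two_le this
  omega

theorem card_lag {P : ℕ} [Fact P.Prime] (J : ℕ) : ∀ {V : Type*} [AddCommGroup V]
    [Module (ZMod P) V] [Finite V] (_ : Module.finrank (ZMod P) V = 2 * J)
    {B : V →ₗ[ZMod P] V →ₗ[ZMod P] ZMod P} (_ : IsSymplectic B),
    {L | IsLagrangian B L}.ncard = ∏ j ∈ Finset.Icc 1 J, (P ^ j + 1) := by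
  classical
  have hP := (Fact.out : P.Prime)
  induction J with
  | zero =>
    intro V _ _ _ hc B h
    have : Subsingleton V := Module.finrank_zero_iff.1 (by simpa using hc)
    have : {L | IsLagrangian B L} = {⊥} := by
      ext L
      have : L = ⊥ := Subsingleton.elim _ _
      simp only [Set.mem_ofPred_eq, Set.mem_singleton_iff, this, iff_true]
      refine isLagrangian_iff.2 fun u => ?_
      simp [Subsingleton.elim u 0]
    simp [this]
  | succ J ih =>
    intro V _ _ _ hc B h
    have := Fintype.ofFinite V
    have := Fintype.ofFinite (Submodule (ZMod P) V)
    have key := Finset.card_mul_eq_card_mul (s := Finset.univ.filter fun L => IsLagrangian B L)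
      (t := Finset.univ.filter fun v : V => v ≠ 0) (fun L v => v ∈ L)
      (m := P ^ (J + 1) - 1) (n := ∏ j ∈ Finset.Icc 1 J, (P ^ j + 1)) ?_ ?_
    · have e1 : (Finset.univ.filter fun v : V => v ≠ 0).card = P ^ (2 * (J + 1)) - 1 := by
        rw [Finset.filter_ne', Finset.card_erase_of_mem (Finset.mem_univ _), Finset.card_univ,
          ← Nat.card_eq_fintype_card, Module.natCard_eq_pow_finrank (K := ZMod P), Nat.card_zmod, hc]
      have e2 : {L | IsLagrangian B L}.ncard =
          (Finset.univ.filter fun L => IsLagrangian B L).card := by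
        rw [← Set.ncard_coe_finset]
        simp
      rw [e2, Finset.prod_Icc_succ_top (by omega)]
      have hpos : 1 < P ^ (J + 1) := Nat.one_lt_pow (by omega) hP.one_lt
      rw [e1] at key
      apply Nat.eq_of_mul_eq_mul_right (Nat.sub_pos_of_lt hpos)
      rw [key]
      have : P ^ (2 * (J + 1)) - 1 = (P ^ (J + 1) + 1) * (P ^ (J + 1) - 1) := by
        rw [mul_comm 2, pow_mul, ← one_pow 2, Nat.sq_sub_sq]
        simp
      rw [this]
      ring
    · intro L hL
      have hL := (card_isotropic_le hc h (L := L)).2.1 (by simpa using hL)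
      rw [← hL, Finset.bipartiteAbove, Finset.filter_filter]
      have : (Finset.univ.filter fun v : V => v ≠ 0 ∧ v ∈ L) =
          (Finset.univ.filter fun v : V => v ∈ L).erase 0 := by
        ext; simp
      rw [this, Finset.card_erase_of_mem (by simp), Nat.card_eq_fintype_card,
        Fintype.card_subtype]
    · intro v hv
      obtain ⟨w, hvw⟩ := exists_pair h (v := v) (by simpa using hv)
      rw [← ih (finrank_pairPerp hc h hvw) (restrForm_symplectic h hvw),
        ← card_lag_through h hvw, Finset.bipartiteBelow, Finset.filter_filter,
        ← Set.ncard_coe_finset]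
      simp

theorem card_lag_mem {P : ℕ} [Fact P.Prime] {J : ℕ} (hJ : 0 < J) {V : Type*} [AddCommGroup V]
    [Module (ZMod P) V] [Finite V] (hc : Module.finrank (ZMod P) V = 2 * J)
    {B : V →ₗ[ZMod P] V →ₗ[ZMod P] ZMod P} (h : IsSymplectic B) {v : V} (hv : v ≠ 0) :
    {L | IsLagrangian B L ∧ v ∈ L}.ncard = ∏ j ∈ Finset.Icc 1 (J - 1), (P ^ j + 1) := by
  obtain ⟨K, rfl⟩ : ∃ K, J = K + 1 := ⟨J - 1, by omega⟩
  obtain ⟨w, hvw⟩ := exists_pair h hv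
  rw [card_lag_through h hvw, card_lag K (finrank_pairPerp hc h hvw) (restrForm_symplectic h hvw)]
  simp

/-- Coset of a subspace. -/
def cosetOf {F V : Type*} [CommRing F] [AddCommGroup V] [Module F V] (x : V) (L : Submodule F V) :
    Set V := (fun y => x + y) '' (L : Set V)

theorem mem_cosetOf {F V : Type*} [CommRing F] [AddCommGroup V] [Module F V] {x y : V}
    {L : Submodule F V} : y ∈ cosetOf x L ↔ y - x ∈ L := by
  simp only [cosetOf, Set.mem_image, SetLike.mem_coe]
  constructor
  · rintro ⟨z, hz, rfl⟩
    simpa using hz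
  · intro hy
    exact ⟨_, hy, by simp⟩

theorem cosetOf_eq {F V : Type*} [CommRing F] [AddCommGroup V] [Module F V] {x y : V}
    {L : Submodule F V} (hy : y ∈ cosetOf x L) : cosetOf x L = cosetOf y L := by
  ext z
  rw [mem_cosetOf] at *
  rw [mem_cosetOf]
  rw [show z - x = (z - y) + (y - x) by abel]
  exact Submodule.add_mem_iff_left _ hy

theorem cosetOf_injective {F V : Type*} [CommRing F] [AddCommGroup V] [Module F V] (x : V) :
    Function.Injective (cosetOf (F := F) x) := by
  intro L M e
  ext y
  have h1 := mem_cosetOf (x := x) (y := y + x) (L := L)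
  have h2 := mem_cosetOf (x := x) (y := y + x) (L := M)
  rw [add_sub_cancel_right] at h1 h2
  rw [← h1, ← h2, e]

theorem mem_affineLagrangians {F V : Type*} [CommRing F] [AddCommGroup V] [Module F V]
    {B : V →ₗ[F] V →ₗ[F] F} {A : Set V} :
    A ∈ affineLagrangians B ↔ ∃ v L, IsLagrangian B L ∧ A = cosetOf v L := Iff.rfl

theorem through_eq {F V : Type*} [CommRing F] [AddCommGroup V] [Module F V]
    {B : V →ₗ[F] V →ₗ[F] F} (x : V) :
    {A ∈ affineLagrangians B | x ∈ A} = cosetOf x '' {L | IsLagrangian B L} := by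
  ext A
  simp only [mem_affineLagrangians, Set.mem_ofPred_eq, Set.mem_image]
  constructor
  · rintro ⟨⟨v, L, hL, rfl⟩, hx⟩
    exact ⟨L, hL, (cosetOf_eq hx).symm⟩
  · rintro ⟨L, hL, rfl⟩
    exact ⟨⟨x, L, hL, rfl⟩, mem_cosetOf.2 (by simp)⟩

theorem through2_eq {F V : Type*} [CommRing F] [AddCommGroup V] [Module F V]
    {B : V →ₗ[F] V →ₗ[F] F} (x y : V) :
    {A ∈ affineLagrangians B | x ∈ A ∧ y ∈ A} =
      cosetOf x '' {L | IsLagrangian B L ∧ y - x ∈ L} := by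
  have := through_eq (B := B) x
  ext A
  rw [Set.ext_iff] at this
  have := this A
  simp only [Set.mem_ofPred_eq, Set.mem_image] at *
  rw [← and_assoc, this]
  constructor
  · rintro ⟨⟨L, hL, rfl⟩, hy⟩
    exact ⟨L, ⟨hL, mem_cosetOf.1 hy⟩, rfl⟩
  · rintro ⟨L, ⟨hL, hy⟩, rfl⟩
    exact ⟨⟨L, hL, rfl⟩, mem_cosetOf.2 hy⟩

theorem ncard_cosetOf {F V : Type*} [CommRing F] [AddCommGroup V] [Module F V] (x : V)
    (L : Submodule F V) : (cosetOf x L).ncard = Nat.card L := by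
  rw [cosetOf, Set.ncard_image_of_injective _ (add_right_injective x)]
  rfl

theorem ncard_affineLagrangians {P : ℕ} [Fact P.Prime] {J : ℕ} {V : Type*} [AddCommGroup V]
    [Module (ZMod P) V] [Finite V] (hc : Module.finrank (ZMod P) V = 2 * J)
    {B : V →ₗ[ZMod P] V →ₗ[ZMod P] ZMod P} (h : IsSymplectic B) :
    (affineLagrangians B).ncard = P ^ J * ∏ j ∈ Finset.Icc 1 J, (P ^ j + 1) := by
  classical
  have hP := (Fact.out : P.Prime)
  have := Fintype.ofFinite V
  have key := Finset.card_mul_eq_card_mul (s := Finset.univ.filter fun A => A ∈ affineLagrangians B)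
      (t := (Finset.univ : Finset V)) (fun A v => v ∈ A)
      (m := P ^ J) (n := ∏ j ∈ Finset.Icc 1 J, (P ^ j + 1)) ?_ ?_
  · have e2 : (affineLagrangians B).ncard =
          (Finset.univ.filter fun A => A ∈ affineLagrangians B).card := by
        rw [← Set.ncard_coe_finset]
        simp
    rw [e2]
    apply Nat.eq_of_mul_eq_mul_right (pow_pos hP.pos J)
    rw [key, Finset.card_univ, ← Nat.card_eq_fintype_card,
      Module.natCard_eq_pow_finrank (K := ZMod P), Nat.card_zmod, hc]
    ring
  · intro A hA
    obtain ⟨v, L, hL, rfl⟩ := mem_affineLagrangians.1 (by simpa using hA : A ∈ _)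
    rw [← (card_isotropic_le hc h).2.1 hL, ← ncard_cosetOf v L, Finset.bipartiteAbove,
      ← Set.ncard_coe_finset]
    simp
  · intro v _
    rw [← card_lag J hc h, ← Set.ncard_image_of_injective _ (cosetOf_injective v),
      ← through_eq, Finset.bipartiteBelow, Finset.filter_filter, ← Set.ncard_coe_finset]
    simp

theorem synth_zero {E ι : Type*} [NormedAddCommGroup E] [InnerProductSpace ℂ E] [Fintype ι]
    (φ : ι → E) (a : ι → ℂ) (h : ∀ i, ∑ j, a j * (inner ℂ (φ i) (φ j) : ℂ) = 0) :
    ∑ j, a j • φ j = 0 := by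
  rw [← inner_self_eq_zero (𝕜 := ℂ)]
  conv_lhs => rw [sum_inner]
  refine Finset.sum_eq_zero fun i _ => ?_
  rw [inner_smul_left, inner_sum]
  simp only [inner_smul_right]
  rw [h i, mul_zero]

theorem finrank_span_add_ker {E ι : Type*} [NormedAddCommGroup E] [InnerProductSpace ℂ E]
    [Fintype ι] (φ : ι → E) :
    Module.finrank ℂ (Submodule.span ℂ (Set.range φ)) +
      Module.finrank ℂ (LinearMap.ker (Fintype.linearCombination ℂ φ)) = Fintype.card ι := by
  rw [← Fintype.range_linearCombination, LinearMap.finrank_range_add_finrank_ker]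
  simp

/-- The phase matrix of a simplex is multiplicative. -/
theorem simplex_forward {E ι : Type*} [NormedAddCommGroup E] [InnerProductSpace ℂ E]
    [Fintype ι] [DecidableEq ι] (φ : ι → E) (m : ℝ) (hm : 1 < m) (N : ι → ι → ℂ)
    (hN : ∀ i, N i i = 1) (hNN : ∀ i j, N i j * N j i = 1)
    (hG : ∀ i j, (inner ℂ (φ i) (φ j) : ℂ) = (if i = j then (m : ℂ) else 0) - N i j)
    (hE : IsETF ℂ φ)
    (hr : Module.finrank ℂ (Submodule.span ℂ (Set.range φ)) + 1 = Fintype.card ι) :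
    (Fintype.card ι : ℝ) = m ∧ ∀ i j l, N i j * N j l = N i l := by
  obtain ⟨-, -, A, hA, hE⟩ := hE
  have hk := finrank_span_add_ker φ
  have hk1 : Module.finrank ℂ (LinearMap.ker (Fintype.linearCombination ℂ φ)) = 1 := by omega
  obtain ⟨c, -, hc⟩ := finrank_eq_one_iff'.1 hk1
  have hcol : ∀ l, ∃ d : ℂ, ∀ i, (if i = l then (A : ℂ) else 0) - inner ℂ (φ i) (φ l)
      = d * c.1 i := by
    intro l
    have hmem : (fun i => (if i = l then (A : ℂ) else 0) - inner ℂ (φ i) (φ l)) ∈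
        LinearMap.ker (Fintype.linearCombination ℂ φ) := by
      rw [LinearMap.mem_ker, Fintype.linearCombination_apply]
      refine synth_zero φ _ fun i => ?_
      have := hE i l
      simp only [sub_mul, Finset.sum_sub_distrib, ite_mul, zero_mul, Finset.sum_ite_eq',
        Finset.mem_univ, if_true]
      rw [sub_eq_zero, show (A : ℂ) * inner ℂ (φ i) (φ l) = _ from this.symm]
      exact Finset.sum_congr rfl fun _ _ => mul_comm _ _
    obtain ⟨d, hd⟩ := hc ⟨_, hmem⟩
    refine ⟨d, fun i => ?_⟩
    have := congrFun (congrArg Subtype.val hd) i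
    simpa using this.symm
  choose d hd using hcol
  -- the modified matrix
  have hQ : ∀ i j, (if i = j then ((A - m : ℝ) : ℂ) else 0) + N i j = d j * c.1 i := by
    intro i j
    rw [← hd j i, hG]
    split_ifs <;> push_cast <;> ring
  have hmin : ∀ i j l, (d j * c.1 i) * (d l * c.1 j) = (d l * c.1 i) * (d j * c.1 j) := by
    intros; ring
  simp only [← hQ] at hmin
  -- nonempty with at least two elements
  have hcard0 : 0 < Fintype.card ι := by omega
  have hm0 : (m : ℂ) - 1 ≠ 0 := by
    rw [sub_ne_zero]; exact_mod_cast hm.ne'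
  have hdiag : ∀ i : ι, (m - 1 : ℂ) * (m - 1) + (Fintype.card ι - 1) = A * (m - 1) := by
    intro i
    have h1 := hE i i
    have h2 : ∀ j, (inner ℂ (φ i) (φ j) : ℂ) * inner ℂ (φ j) (φ i) =
        (if i = j then (m - 1 : ℂ) * (m - 1) - 1 else 0) + 1 := by
      intro j
      rw [hG, hG]
      by_cases h : i = j
      · subst h; simp [hN]
      · simp [h, Ne.symm h, hNN]
    simp only [h2, Finset.sum_add_distrib, Finset.sum_ite_eq, Finset.mem_univ, if_true,
      Finset.sum_const, Finset.card_univ, nsmul_eq_mul, mul_one] at h1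
    rw [hG] at h1
    simp only [if_true, hN] at h1
    rw [← show _ = (A : ℂ) * (m - 1) from h1]
    ring
  obtain ⟨i0⟩ := Fintype.card_pos_iff.1 hcard0
  have hcard1 : Fintype.card ι ≠ 1 := by
    intro h
    rw [h] at hr
    have hz : Module.finrank ℂ (Submodule.span ℂ (Set.range φ)) = 0 := by omega
    have : FiniteDimensional ℂ (Submodule.span ℂ (Set.range φ)) :=
      FiniteDimensional.span_of_finite ℂ (Set.finite_range φ)
    have hb := Submodule.finrank_eq_zero.1 hz
    have h0 : φ i0 = 0 := by
      have : φ i0 ∈ Submodule.span ℂ (Set.range φ) := Submodule.subset_span ⟨i0, rfl⟩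
      rw [hb] at this
      simpa using this
    have := hG i0 i0
    rw [h0, inner_self_eq_zero.2 rfl] at this
    simp only [if_true, hN] at this
    exact hm0 this.symm
  have hcard : 1 < Fintype.card ι := by omega
  have hdiagR : (m - 1) * (m - 1) + ((Fintype.card ι : ℝ) - 1) = A * (m - 1) := by
    exact_mod_cast hdiag i0
  have hcR : (1 : ℝ) < Fintype.card ι := by exact_mod_cast hcard
  have hpos : 0 < A - (m - 1) := by nlinarith
  obtain ⟨i1, hi1⟩ := Fintype.exists_ne_of_one_lt_card hcard i0
  have h2 := hmin i0 i1 i0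
  simp only [hi1, hi1.symm, if_true, if_false, zero_add, hN, hNN] at h2
  have h3 : (1 : ℝ) = (A - m + 1) * (A - m + 1) := by exact_mod_cast h2
  have hAm : A = m := by nlinarith
  subst hAm
  refine ⟨by nlinarith, fun i j l => ?_⟩
  have := hmin i j l
  simpa [hN] using this

theorem simplex_backward {E ι : Type*} [NormedAddCommGroup E] [InnerProductSpace ℂ E]
    [Fintype ι] [DecidableEq ι] (φ : ι → E) (m : ℝ) (hm : 1 < m) (c c' : ι → ℂ)
    (hcc : ∀ i, c i * c' i = 1) (hn : ∀ i j, ‖c i * c' j‖ = 1)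
    (hG : ∀ i j, (inner ℂ (φ i) (φ j) : ℂ) = (if i = j then (m : ℂ) else 0) - c i * c' j)
    (hcard : (Fintype.card ι : ℝ) = m) :
    IsETF ℂ φ ∧ Module.finrank ℂ (Submodule.span ℂ (Set.range φ)) + 1 = Fintype.card ι := by
  have hcardC : (Fintype.card ι : ℂ) = m := by exact_mod_cast hcard
  have hcc' : ∀ i, c' i * c i = 1 := fun i => by rw [mul_comm, hcc]
  refine ⟨⟨⟨m - 1, by linarith, fun i => ?_⟩, ⟨1, one_pos, fun i j hij => ?_⟩,
    ⟨m, by linarith, fun i l => ?_⟩⟩, ?_⟩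
  · rw [hG]; simp [hcc]
  · rw [hG]; simpa [hij] using hn i j
  · simp only [hG, sub_mul, mul_sub, Finset.sum_sub_distrib, ite_mul, mul_ite, zero_mul, mul_zero,
      Finset.sum_ite_eq, Finset.sum_ite_eq', Finset.mem_univ, if_true]
    have : ∀ j, c i * c' j * (c j * c' l) = c i * c' l := by
      intro j
      linear_combination (c i * c' l) * hcc j
    simp only [this, Finset.sum_const, Finset.card_univ, nsmul_eq_mul, hcardC]
    simp only [RCLike.ofReal_eq_complex_ofReal]
    ring
  · have hm0 : (m : ℂ) ≠ 0 := by exact_mod_cast (by linarith : m ≠ 0)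
    have hne : Nonempty ι := by
      rw [← Fintype.card_pos_iff]
      have : (0 : ℝ) < Fintype.card ι := by rw [hcard]; linarith
      exact_mod_cast this
    obtain ⟨i0⟩ := hne
    rw [← finrank_span_add_ker φ]
    congr 1
    symm
    have hcm : c ∈ LinearMap.ker (Fintype.linearCombination ℂ φ) := by
      rw [LinearMap.mem_ker, Fintype.linearCombination_apply]
      refine synth_zero φ _ fun i => ?_
      have : ∀ j, c j * (c i * c' j) = c i := fun j => by linear_combination (c i) * hcc j
      simp only [hG, mul_sub, Finset.sum_sub_distrib, mul_ite, mul_zero, Finset.sum_ite_eq,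
        Finset.mem_univ, if_true, this, Finset.sum_const, Finset.card_univ, nsmul_eq_mul, hcardC]
      ring
    refine finrank_eq_one_iff'.2 ⟨⟨c, hcm⟩, ?_, ?_⟩
    · intro h
      have := congrFun (congrArg Subtype.val h) i0
      have h1 := hcc i0
      simp only at this
      rw [this] at h1
      simp at h1
    · rintro ⟨a, ha⟩
      refine ⟨(∑ j, a j * c' j) / m, Subtype.ext (funext fun i => ?_)⟩
      rw [LinearMap.mem_ker, Fintype.linearCombination_apply] at ha
      have h1 : (inner ℂ (φ i) (∑ j, a j • φ j) : ℂ) = 0 := by rw [ha, inner_zero_right]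
      simp only [inner_sum, inner_smul_right, hG, mul_sub, Finset.sum_sub_distrib, mul_ite,
        mul_zero, Finset.sum_ite_eq, Finset.mem_univ, if_true] at h1
      have h2 : ∑ j, a j * (c i * c' j) = (∑ j, a j * c' j) * c i := by
        rw [Finset.sum_mul]
        exact Finset.sum_congr rfl fun _ _ => by ring
      rw [h2] at h1
      simp only [SetLike.mk_smul_mk, Pi.smul_apply, smul_eq_mul]
      field_simp
      linear_combination -h1

theorem affine_of_triples {P J : ℕ} [Fact P.Prime] {V : Type*} [AddCommGroup V]
    [Module (ZMod P) V] [Finite V] (hc : Module.finrank (ZMod P) V = 2 * J)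
    {B : V →ₗ[ZMod P] V →ₗ[ZMod P] ZMod P} (h : IsSymplectic B) (K : Set V)
    (hK : K.ncard = P ^ J) (ht : ∀ x ∈ K, ∀ y ∈ K, ∀ z ∈ K, B x y + B y z = B x z) :
    K ∈ affineLagrangians B := by
  have hP := (Fact.out : P.Prime)
  have hne : K.Nonempty := by
    apply Set.nonempty_of_ncard_ne_zero
    rw [hK]
    exact (pow_pos hP.pos J).ne'
  obtain ⟨w, hw⟩ := hne
  let L := Submodule.span (ZMod P) ((fun x => x - w) '' K)
  have hiso : ∀ x ∈ L, ∀ y ∈ L, B x y = 0 := by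
    intro x hx y hy
    induction hx, hy using Submodule.span_induction₂ with
    | mem_mem x y hx hy =>
      obtain ⟨x, hx, rfl⟩ := hx
      obtain ⟨y, hy, rfl⟩ := hy
      have := ht x hx w hw y hy
      simp only [map_sub, LinearMap.sub_apply, h.1]
      linear_combination -this
    | zero_left => simp
    | zero_right => simp
    | add_left _ _ _ _ _ _ h1 h2 => simp [h1, h2]
    | add_right _ _ _ _ _ _ h1 h2 => simp [h1, h2]
    | smul_left _ _ _ _ _ h1 => simp [h1]
    | smul_right _ _ _ _ _ h1 => simp [h1]
  have hsub : K ⊆ cosetOf w L := fun x hx => mem_cosetOf.2 (Submodule.subset_span ⟨x, hx, rfl⟩)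
  have hle := (card_isotropic_le hc h).1 hiso
  have heq : K = cosetOf w L :=
    Set.eq_of_subset_of_ncard_le hsub (by rw [ncard_cosetOf, hK]; exact hle) (Set.toFinite _)
  have hcL : Nat.card L = P ^ J := by rw [← ncard_cosetOf w L, ← heq, hK]
  exact mem_affineLagrangians.2 ⟨w, L, (card_isotropic_le hc h).2.2 hiso hcL, heq⟩

/-- The binder of the dual of a symplectic ETF is exactly the set
of all affine Lagrangian subspaces, which form a BIBD with parameters
`(P^{2J}, P^J, ∏_{j=1}^{J−1}(P^j+1), ∏_{j=1}^{J}(P^j+1), P^J ∏_{j=1}^{J}(P^j+1))`. -/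
theorem binder_of_dual_symplectic_ETF
    {P J : ℕ} [Fact (Nat.Prime P)] (hJ : 0 < J)
    {V : Type*} [AddCommGroup V] [Module (ZMod P) V] [Fintype V] [DecidableEq V]
    (hdim : Module.finrank (ZMod P) V = 2 * J)
    (B : V →ₗ[ZMod P] V →ₗ[ZMod P] ZMod P) (hB : IsSymplectic B)
    {E : Type*} [NormedAddCommGroup E] [InnerProductSpace ℂ E]
    (Ψ : V → E)
    (hdiag : ∀ v, (inner ℂ (Ψ v) (Ψ v) : ℂ) = ((P : ℂ) ^ J - 1))
    (hoff : ∀ v₁ v₂ : V, v₁ ≠ v₂ → (inner ℂ (Ψ v₁) (Ψ v₂) : ℂ) =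
      -Complex.exp (2 * Real.pi * Complex.I * ((B v₁ v₂).val : ℂ) / (P : ℂ))) :
    (binder ℂ Ψ =
      {K : Finset V | (K : Set V) ∈ affineLagrangians B}) ∧
    (affineLagrangians B).ncard = P ^ J * ∏ j ∈ Finset.Icc 1 J, (P ^ j + 1) ∧
    (∀ A ∈ affineLagrangians B, A.ncard = P ^ J) ∧
    (∀ x : V, {A ∈ affineLagrangians B | x ∈ A}.ncard =
      ∏ j ∈ Finset.Icc 1 J, (P ^ j + 1)) ∧
    (∀ x y : V, x ≠ y → {A ∈ affineLagrangians B | x ∈ A ∧ y ∈ A}.ncard =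
      ∏ j ∈ Finset.Icc 1 (J - 1), (P ^ j + 1)) := by
  have hP := (Fact.out : P.Prime)
  have hcardA : ∀ A ∈ affineLagrangians B, A.ncard = P ^ J := by
    rintro A ⟨v, L, hL, rfl⟩
    exact (ncard_cosetOf v L).trans ((card_isotropic_le hdim hB).2.1 hL)
  refine ⟨?_, ncard_affineLagrangians hdim hB, hcardA, fun x => ?_, fun x y hxy => ?_⟩
  · have hm : (1 : ℝ) < (P : ℝ) ^ J := by
      exact_mod_cast Nat.one_lt_pow hJ.ne' hP.one_lt
    have hG : ∀ x y : V, (inner ℂ (Ψ x) (Ψ y) : ℂ) =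
        (if x = y then (((P : ℝ) ^ J : ℝ) : ℂ) else 0) - ZMod.stdAddChar (B x y) := by
      intro x y
      by_cases hxy : x = y
      · subst hxy
        rw [hdiag, hB.1]
        simp
      · rw [hoff x y hxy, ZMod.stdAddChar_apply, ZMod.toCircle_apply]
        simp [hxy]
    ext K
    have hrange : Ψ '' (K : Set V) = Set.range (fun k : K => Ψ k.1) := Set.image_eq_range _ _
    have hGK : ∀ i j : K, (inner ℂ (Ψ i.1) (Ψ j.1) : ℂ) =
        (if i = j then (((P : ℝ) ^ J : ℝ) : ℂ) else 0) - ZMod.stdAddChar (B i.1 j.1) := by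
      intro i j
      rw [hG]
      simp only [Subtype.ext_iff]
    change (IsETF ℂ (fun k : K => Ψ k.1) ∧ Module.finrank ℂ (Submodule.span ℂ (Ψ '' (K : Set V))) + 1
      = K.card) ↔ (K : Set V) ∈ affineLagrangians B
    rw [hrange, ← Fintype.card_coe K]
    constructor
    · rintro ⟨h1, h2⟩
      obtain ⟨hc, ht⟩ := simplex_forward (fun k : K => Ψ k.1) _ hm
        (fun i j : K => ZMod.stdAddChar (B i.1 j.1)) (fun i => by simp [hB.1])
        (fun i j => by
          rw [← AddChar.map_add_eq_mul, symp_skew hB.1 j.1 i.1, add_neg_cancel,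
            AddChar.map_zero_eq_one])
        hGK h1 h2
      refine affine_of_triples hdim hB _ ?_ ?_
      · rw [Set.ncard_coe_finset, ← Fintype.card_coe]
        exact_mod_cast hc
      · intro x hx y hy z hz
        have := ht ⟨x, hx⟩ ⟨y, hy⟩ ⟨z, hz⟩
        simp only [← AddChar.map_add_eq_mul] at this
        exact ZMod.injective_stdAddChar this
    · intro hK
      have hc := hcardA _ hK
      rw [Set.ncard_coe_finset, ← Fintype.card_coe] at hc
      obtain ⟨v, L, hL, hKL⟩ := mem_affineLagrangians.1 hK
      have hmem : ∀ i : K, i.1 - v ∈ L := by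
        intro i
        have : i.1 ∈ (K : Set V) := i.2
        rw [hKL] at this
        exact mem_cosetOf.1 this
      have hBK : ∀ i j : K, B i.1 j.1 = B i.1 v + - B j.1 v := by
        intro i j
        have := (isLagrangian_iff.1 hL _).1 (hmem j) _ (hmem i)
        simp only [map_sub, LinearMap.sub_apply, hB.1] at this
        have h2 := symp_skew hB.1 v j.1
        linear_combination this + h2
      refine simplex_backward (fun k : K => Ψ k.1) _ hm
        (fun i : K => ZMod.stdAddChar (B i.1 v)) (fun i : K => ZMod.stdAddChar (- B i.1 v))
        (fun i => by rw [← AddChar.map_add_eq_mul, add_neg_cancel, AddChar.map_zero_eq_one])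
        (fun i j => by
          rw [← AddChar.map_add_eq_mul, ZMod.stdAddChar_apply]
          exact Circle.norm_coe _)
        (fun i j => by rw [hGK, ← AddChar.map_add_eq_mul, hBK]) ?_
      exact_mod_cast hc
  · rw [through_eq, Set.ncard_image_of_injective _ (cosetOf_injective x), card_lag J hdim hB]
  · rw [through2_eq, Set.ncard_image_of_injective _ (cosetOf_injective x),
      card_lag_mem hJ hdim hB (sub_ne_zero.2 hxy.symm)]
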